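/- arXiv:1402.4415 — 4 statements merged into one kernel-verified Lean document; each statement's English description precedes it below -/
import Mathlib

section
/- Let U ⊆ ℝⁿ be a nonempty compact convex set, V a nonempty compact metric space, and L : U × V → ℝ jointly continuous such that for every fixed v ∈ V the map u ↦ L(u,v) is concave on U. Then the mixed Isaacs condition holds: sup_{u ∈ U} inf_{ν ∈ P(V)} ∫_V L(u,v) ν(dv) = inf_{ν ∈ P(V)} sup_{u ∈ U} ∫_V L(u,v) ν(dv); in particular sup_{u ∈ U} inf_{v ∈ V} L(u,v) = inf_{ν ∈ P(V)} sup_{u ∈ U} ∫_V L(u,v) ν(dv). -/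
open MeasureTheory

/-!
Fix `c > sup_u inf_v L(u, v)`. By compactness of `U` and upper semicontinuity, finitely many points
`v₁, …, v_k` suffice to get `min_i L(u, v_i) < c` for every `u ∈ U`. Sion's theorem on the simplex
of weights times `U` turns the minimum into a single convex combination `∑ w_i L(u, v_i) ≤ c`, which
is the integral of `L(u, ·)` against the probability measure `∑ w_i δ_{v_i}`. Hence
`inf_ν sup_u ∫ L(u, v) ν(dv) ≤ c`. The other inequalities are weak duality and the fact that an
average is at least the infimum.
-/

theorem iSup_iInf_eq_iInf_iSup_of_forall_exists_lt {α β γ : Type*}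
    [ConditionallyCompleteLinearOrder γ] [DenselyOrdered γ] [Nonempty α] [Nonempty β]
    {g : α → β → γ} (hbelow : ∀ a, BddBelow (Set.range (g a)))
    (habove : ∀ b, BddAbove (Set.range fun a => g a b))
    (h : ∀ c, (∀ a, ∃ b, g a b < c) → ∃ b, ∀ a, g a b ≤ c) :
    ⨆ a, ⨅ b, g a b = ⨅ b, ⨆ a, g a b := by
  have hle (a : α) (b : β) : ⨅ b', g a b' ≤ ⨆ a', g a' b :=
    (ciInf_le (hbelow a) b).trans (le_ciSup (habove b) a)
  have hbddInf : BddAbove (Set.range fun a => ⨅ b, g a b) :=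
    ⟨_, Set.forall_mem_range.2 fun a => hle a (Classical.arbitrary β)⟩
  have hbddSup : BddBelow (Set.range fun b => ⨆ a, g a b) :=
    ⟨_, Set.forall_mem_range.2 fun b => hle (Classical.arbitrary α) b⟩
  refine le_antisymm (ciSup_le fun a => le_ciInf (hle a))
    (le_of_forall_gt_imp_ge_of_dense fun c hc => ?_)
  obtain ⟨b, hb⟩ := h c fun a => exists_lt_of_ciInf_lt ((le_ciSup hbddInf a).trans_lt hc)
  exact (ciInf_le hbddSup b).trans (ciSup_le hb)

theorem concaveOn_sum {𝕜 E β ι : Type*} [Semiring 𝕜] [PartialOrder 𝕜] [AddCommMonoid E] [SMul 𝕜 E]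
    [AddCommMonoid β] [PartialOrder β] [IsOrderedAddMonoid β] [Module 𝕜 β] {U : Set E}
    {s : Finset ι} {f : ι → E → β} (hU : Convex 𝕜 U) (hf : ∀ i ∈ s, ConcaveOn 𝕜 U (f i)) :
    ConcaveOn 𝕜 U fun u => ∑ i ∈ s, f i u := by
  have hsum : ConcaveOn 𝕜 U (∑ i ∈ s, f i) :=
    Finset.sum_induction _ (ConcaveOn 𝕜 U) (fun _ _ => ConcaveOn.add) (concaveOn_const 0 hU) hf
  simpa only [Finset.sum_fn] using hsum

theorem upperSemicontinuousOn_const_mul {X R : Type*} [TopologicalSpace X] [Mul R] [Zero R]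
    [LinearOrder R] [PosMulMono R] [TopologicalSpace R] [OrderTopology R]
    [SeparatelyContinuousMul R] {S : Set X} {f : X → R} {a : R} (ha : 0 ≤ a)
    (hf : UpperSemicontinuousOn f S) :
    UpperSemicontinuousOn (fun x => a * f x) S :=
  (continuous_const_mul a).comp_upperSemicontinuousOn hf fun _ _ h => mul_le_mul_of_nonneg_left h ha

theorem exists_mem_stdSimplex_forall_sum_mul_le {E : Type*} [AddCommGroup E] [Module ℝ E]
    [TopologicalSpace E] [IsTopologicalAddGroup E] [ContinuousSMul ℝ E] {U : Set E} {ι : Type*}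
    [Fintype ι] {f : E → ι → ℝ} {c : ℝ} (hUne : U.Nonempty) (hUcomp : IsCompact U)
    (hUconv : Convex ℝ U) (husc : ∀ i, UpperSemicontinuousOn (fun u => f u i) U)
    (hconc : ∀ i, ConcaveOn ℝ U fun u => f u i) (hc : ∀ u ∈ U, ∃ i, f u i ≤ c) :
    ∃ w ∈ stdSimplex ℝ ι, ∀ u ∈ U, ∑ i, w i * f u i ≤ c := by
  classical
  obtain ⟨i₀, -⟩ := hc _ hUne.some_mem
  have hcont (u : E) : Continuous fun w : ι → ℝ => ∑ i, w i * f u i := by fun_prop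
  have hconvex (u : E) : ConvexOn ℝ (stdSimplex ℝ ι) fun w => ∑ i, w i * f u i :=
    (Fintype.linearCombination ℝ (f u)).convexOn (convex_stdSimplex ℝ ι)
  have husc_sum (w : ι → ℝ) (hw : w ∈ stdSimplex ℝ ι) :
      UpperSemicontinuousOn (fun u => ∑ i, w i * f u i) U :=
    upperSemicontinuousOn_sum fun i _ => upperSemicontinuousOn_const_mul (hw.1 i) (husc i)
  have hconc_sum (w : ι → ℝ) (hw : w ∈ stdSimplex ℝ ι) :
      ConcaveOn ℝ U fun u => ∑ i, w i * f u i :=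
    concaveOn_sum hUconv fun i _ => (hconc i).smul (hw.1 i)
  obtain ⟨w, hw, b, hb, hsaddle⟩ := Sion.exists_isSaddlePointOn
    ⟨_, single_mem_stdSimplex ℝ i₀⟩ (convex_stdSimplex ℝ ι) (isCompact_stdSimplex ℝ ι)
    (fun u _ => (hcont u).lowerSemicontinuous.lowerSemicontinuousOn _)
    (fun u _ => (hconvex u).quasiconvexOn) hUconv hUne hUcomp husc_sum
    (fun w hw => (hconc_sum w hw).quasiconcaveOn)
  obtain ⟨j, hj⟩ := hc b hb
  refine ⟨w, hw, fun u hu => ?_⟩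
  calc ∑ i, w i * f u i
      ≤ ∑ i, (Pi.single j 1 : ι → ℝ) i * f b i := hsaddle _ (single_mem_stdSimplex ℝ j) u hu
    _ = f b j := by simp [Pi.single_apply]
    _ ≤ c := hj

section ProbabilityMeasure

variable {V : Type*} [MeasurableSpace V]

theorem exists_probabilityMeasure_forall_integral_eq_sum_mul {ι : Type*} [Fintype ι] {w : ι → ℝ}
    (hw : w ∈ stdSimplex ℝ ι) (x : ι → V) :
    ∃ ν : ProbabilityMeasure V, ∀ f : V → ℝ, Measurable f →
      ∫ v, f v ∂(ν : Measure V) = ∑ i, w i * f (x i) := by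
  refine ⟨⟨Measure.sum fun i => ENNReal.ofReal (w i) • Measure.dirac (x i),
    HasSum.isProbabilityMeasure_sum_dirac hw.1 (hw.2 ▸ hasSum_fintype w)⟩, fun f hf => ?_⟩
  have hint (i : ι) : Integrable f (ENNReal.ofReal (w i) • Measure.dirac (x i)) :=
    (integrable_dirac' hf.stronglyMeasurable enorm_lt_top).smul_measure ENNReal.ofReal_ne_top
  simp [Measure.sum_fintype, integral_finsetSum_measure fun i _ => hint i,
    integral_dirac' f _ hf.stronglyMeasurable, hw.1]

theorem abs_integral_le_of_forall_abs_le {μ : Measure V} [IsProbabilityMeasure μ] {f : V → ℝ}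
    {M : ℝ} (hM : ∀ v, |f v| ≤ M) : |∫ v, f v ∂μ| ≤ M := by
  simpa using norm_integral_le_of_norm_le_const (μ := μ) (f := f) (C := M) (.of_forall hM)

theorem iInf_integral_probabilityMeasure_eq_iInf [Nonempty V] {f : V → ℝ} {M : ℝ}
    (hf : Measurable f) (hM : ∀ v, |f v| ≤ M) :
    ⨅ ν : ProbabilityMeasure V, ∫ v, f v ∂(ν : Measure V) = ⨅ v, f v := by
  have : Nonempty (ProbabilityMeasure V) := ⟨diracProba (Classical.arbitrary V)⟩
  refine le_antisymm (le_ciInf fun v => ?_) (le_ciInf fun ν => ?_)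
  · calc ⨅ ν : ProbabilityMeasure V, ∫ v, f v ∂(ν : Measure V)
        ≤ ∫ v', f v' ∂(diracProba v : Measure V) :=
          ciInf_le ⟨-M, Set.forall_mem_range.2 fun ν =>
            neg_le_of_abs_le (abs_integral_le_of_forall_abs_le hM)⟩ _
      _ = f v := integral_dirac' f v hf.stronglyMeasurable
  · obtain ⟨v, hv⟩ := exists_le_integral (μ := (ν : Measure V))
      (.of_bound hf.aestronglyMeasurable M (.of_forall hM))
    exact (ciInf_le ⟨-M, Set.forall_mem_range.2 fun v => neg_le_of_abs_le (hM v)⟩ v).trans hv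

end ProbabilityMeasure

section Minimax

variable {E : Type*} [AddCommGroup E] [Module ℝ E] [TopologicalSpace E] [IsTopologicalAddGroup E]
  [ContinuousSMul ℝ E] {U : Set E} {V : Type*} [MeasurableSpace V] {L : E → V → ℝ}

theorem exists_probabilityMeasure_forall_integral_le {c : ℝ} (hUne : U.Nonempty)
    (hUcomp : IsCompact U) (hUconv : Convex ℝ U) (hmeas : ∀ u ∈ U, Measurable (L u))
    (husc : ∀ v, UpperSemicontinuousOn (fun u => L u v) U)
    (hconc : ∀ v, ConcaveOn ℝ U fun u => L u v) (hc : ∀ u ∈ U, ∃ v, L u v < c) :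
    ∃ ν : ProbabilityMeasure V, ∀ u ∈ U, ∫ v, L u v ∂(ν : Measure V) ≤ c := by
  have hempty : U ∩ ⋂ v ∈ Set.univ, (fun u => L u v) ⁻¹' Set.Ici c = ∅ := by
    simpa [Set.eq_empty_iff_forall_notMem] using hc
  obtain ⟨t, ht⟩ := (UpperSemicontinuousOn.inter_biInter_preimage_Ici_eq_empty_iff_exists_finset
    hUcomp fun v _ => husc v).1 hempty
  obtain ⟨w, hw, hwc⟩ := exists_mem_stdSimplex_forall_sum_mul_le (ι := t)
    (f := fun u i => L u i) (c := c) hUne hUcomp hUconv (fun i => husc i) (fun i => hconc i)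
    fun u hu => (ht u hu).elim fun v hv => ⟨⟨v, hv.1⟩, hv.2.le⟩
  obtain ⟨ν, hν⟩ := exists_probabilityMeasure_forall_integral_eq_sum_mul hw fun i => (i : V)
  exact ⟨ν, fun u hu => (hν (L u) (hmeas u hu)).trans_le (hwc u hu)⟩

theorem mixed_isaacs_of_concave_general [Nonempty V] {M : ℝ} (hUne : U.Nonempty)
    (hUcomp : IsCompact U) (hUconv : Convex ℝ U) (hmeas : ∀ u ∈ U, Measurable (L u))
    (hM : ∀ u ∈ U, ∀ v, |L u v| ≤ M) (husc : ∀ v, UpperSemicontinuousOn (fun u => L u v) U)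
    (hconc : ∀ v, ConcaveOn ℝ U fun u => L u v) :
    ((⨆ u : U, ⨅ ν : ProbabilityMeasure V, ∫ v, L u v ∂(ν : Measure V)) =
        ⨅ ν : ProbabilityMeasure V, ⨆ u : U, ∫ v, L u v ∂(ν : Measure V)) ∧
      (⨆ u : U, ⨅ v : V, L u v) =
        ⨅ ν : ProbabilityMeasure V, ⨆ u : U, ∫ v, L u v ∂(ν : Measure V) := by
  have : Nonempty U := hUne.to_subtype
  have : Nonempty (ProbabilityMeasure V) := ⟨diracProba (Classical.arbitrary V)⟩
  have hbound (u : U) (ν : ProbabilityMeasure V) : |∫ v, L u v ∂(ν : Measure V)| ≤ M :=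
    abs_integral_le_of_forall_abs_le (hM u u.2)
  have hbelow (u : U) : BddBelow (Set.range fun ν : ProbabilityMeasure V =>
      ∫ v, L u v ∂(ν : Measure V)) :=
    ⟨-M, Set.forall_mem_range.2 fun ν => neg_le_of_abs_le (hbound u ν)⟩
  have habove (ν : ProbabilityMeasure V) : BddAbove (Set.range fun u : U =>
      ∫ v, L u v ∂(ν : Measure V)) :=
    ⟨M, Set.forall_mem_range.2 fun u => le_of_abs_le (hbound u ν)⟩
  have hinf (u : U) : ⨅ ν : ProbabilityMeasure V, ∫ v, L u v ∂(ν : Measure V) = ⨅ v, L u v :=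
    iInf_integral_probabilityMeasure_eq_iInf (hmeas u u.2) (hM u u.2)
  have hminimax := iSup_iInf_eq_iInf_iSup_of_forall_exists_lt hbelow habove fun c hc => by
    have hpure (u : E) (hu : u ∈ U) : ∃ v, L u v < c := by
      obtain ⟨ν, hν⟩ := hc ⟨u, hu⟩
      exact exists_lt_of_ciInf_lt (hinf ⟨u, hu⟩ ▸ (ciInf_le (hbelow _) ν).trans_lt hν)
    simpa using exists_probabilityMeasure_forall_integral_le hUne hUcomp hUconv hmeas husc
      hconc hpure
  exact ⟨hminimax, by simpa only [hinf] using hminimax⟩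

end Minimax

/-- Let `U ⊆ ℝⁿ` be a nonempty compact convex set, `V` a nonempty compact
metric space, `L : U × V → ℝ` jointly continuous and concave in `u` for each fixed `v`.
Then the mixed Isaacs condition holds:
`sup_{u ∈ U} inf_{ν ∈ P(V)} ∫ L(u,v) ν(dv) = inf_{ν ∈ P(V)} sup_{u ∈ U} ∫ L(u,v) ν(dv)`;
in particular `sup_{u ∈ U} inf_{v ∈ V} L(u,v) = inf_{ν ∈ P(V)} sup_{u ∈ U} ∫ L(u,v) ν(dv)`. -/
theorem mixed_isaacs_of_concave
    {n : ℕ} (U : Set (EuclideanSpace ℝ (Fin n)))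
    (hUne : U.Nonempty) (hUcomp : IsCompact U) (hUconv : Convex ℝ U)
    {V : Type*} [MetricSpace V] [CompactSpace V] [Nonempty V]
    [MeasurableSpace V] [BorelSpace V]
    (L : EuclideanSpace ℝ (Fin n) → V → ℝ)
    (hL : ContinuousOn (fun p : EuclideanSpace ℝ (Fin n) × V => L p.1 p.2)
      (U ×ˢ (Set.univ : Set V)))
    (hconc : ∀ v : V, ConcaveOn ℝ U fun u => L u v) :
    ((⨆ u : U, ⨅ ν : ProbabilityMeasure V, ∫ v, L u v ∂(ν : Measure V)) =
        ⨅ ν : ProbabilityMeasure V, ⨆ u : U, ∫ v, L u v ∂(ν : Measure V)) ∧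
      (⨆ u : U, ⨅ v : V, L u v) =
        ⨅ ν : ProbabilityMeasure V, ⨆ u : U, ∫ v, L u v ∂(ν : Measure V) := by
  have hLu (v : V) : ContinuousOn (fun u => L u v) U :=
    hL.comp (f := fun u => (u, v)) (by fun_prop) fun u hu => ⟨hu, Set.mem_univ _⟩
  have hLv (u : EuclideanSpace ℝ (Fin n)) (hu : u ∈ U) : Continuous (L u) :=
    hL.comp_continuous (f := fun v => (u, v)) (by fun_prop) fun v => ⟨hu, Set.mem_univ _⟩
  obtain ⟨M, hM⟩ := (hUcomp.prod isCompact_univ).exists_bound_of_continuousOn hL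
  exact mixed_isaacs_of_concave_general hUne hUcomp hUconv (fun u hu => (hLv u hu).measurable)
    (fun u hu v => hM (u, v) ⟨hu, Set.mem_univ _⟩)
    (fun v => (hLu v).upperSemicontinuousOn) hconc
end

section
/- Let X be a second-countable topological space and 𝓕 a nonempty family of continuous functions from X to ℝ. Then there exists a countable subfamily 𝓖 ⊆ 𝓕 such that for every x ∈ X, sup_{g ∈ 𝓖} g(x) = sup_{f ∈ 𝓕} f(x) (as an equality in the extended real numbers ℝ ∪ {+∞}). -/
/-!
For each `d` in a countable dense subset of the codomain, the superlevel set `{x | d < sup f x}` is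
the union of the open sets `{x | d < f x}`, hence by the hereditary Lindelöf property of countably
many of them. Collecting the functions so chosen for all `d` yields the countable subfamily: any
value strictly below the supremum is separated from it by some `d`. Mathlib carries out this
argument in `exists_countable_lowerSemicontinuous_isLUB`.
-/

section

variable {ι X E : Type*} [TopologicalSpace X] [HereditarilyLindelofSpace X] [TopologicalSpace E]

theorem exists_countable_subset_isLUB_image_of_lowerSemicontinuous [LinearOrder E]
    [OrderClosedTopology E] [DenselyOrdered E] [TopologicalSpace.SeparableSpace E]
    {I : Set ι} {f : ι → X → E} {s : X → E} (hf : ∀ i ∈ I, LowerSemicontinuous (f i))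
    (hs : IsLUB (f '' I) s) :
    ∃ J ⊆ I, J.Countable ∧ IsLUB (f '' J) s := by
  obtain ⟨G, hGI, hG, hGs⟩ :=
    exists_countable_lowerSemicontinuous_isLUB (Set.forall_mem_image.2 hf) hs
  obtain ⟨J, hJI, hJinj, rfl⟩ := Set.SurjOn.exists_subset_injOn_image_eq hGI
  exact ⟨J, hJI, Set.countable_of_injective_of_countable_image hJinj hG, hGs⟩

theorem exists_countable_subfamily_same_sup_general [CompleteLinearOrder E]
    [OrderClosedTopology E] [DenselyOrdered E] [TopologicalSpace.SeparableSpace E]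
    (I : Set ι) (f : ι → X → E) (hf : ∀ i ∈ I, LowerSemicontinuous (f i)) :
    ∃ J ⊆ I, J.Countable ∧ ∀ x, ⨆ j : J, f j x = ⨆ i : I, f i x := by
  obtain ⟨J, hJI, hJ, hJsup⟩ :=
    exists_countable_subset_isLUB_image_of_lowerSemicontinuous hf (isLUB_sSup (f '' I))
  have sup_eq : ⨆ j : J, f j = ⨆ i : I, f i := by
    rw [← sSup_image', ← sSup_image', hJsup.sSup_eq]
  exact ⟨J, hJI, hJ, fun x ↦ by simpa only [iSup_apply] using congrFun sup_eq x⟩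

end

/-- On a second-countable topological space `X`, any nonempty family `F` of
continuous real-valued functions admits a countable subfamily `G ⊆ F` with the same
pointwise supremum (in the extended reals). -/
theorem exists_countable_subfamily_same_sup
    {X : Type*} [TopologicalSpace X] [SecondCountableTopology X]
    (F : Set (X → ℝ)) (hFne : F.Nonempty) (hF : ∀ f ∈ F, Continuous f) :
    ∃ G ⊆ F, G.Countable ∧
      ∀ x, (⨆ g : G, ((g : X → ℝ) x : EReal)) = ⨆ f : F, ((f : X → ℝ) x : EReal) :=
  exists_countable_subfamily_same_sup_general F (fun f x ↦ (f x : EReal)) fun f hf ↦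
    (continuous_coe_real_ereal.comp (hF f hf)).lowerSemicontinuous
end

section
/- Let X be a second-countable topological space and 𝓕 a nonempty family of continuous functions from X to ℝ that is closed under pointwise maximum (if f₁, f₂ ∈ 𝓕 then max(f₁, f₂) ∈ 𝓕). Then there exists a pointwise nondecreasing sequence (f_n)_{n ∈ ℕ} of elements of 𝓕 such that for every x ∈ X, sup_n f_n(x) = sup_{f ∈ 𝓕} f(x) (as an equality in the extended real numbers ℝ ∪ {+∞}). -/
/-! Each superlevel set of the supremum is the union of the open superlevel sets of the members of
the family, so the Lindelöf property, applied at a countable dense set of levels, singles out a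
countable subfamily with the same supremum. In a directed family, a countable subfamily is
dominated by a monotone sequence of members, obtained by successively choosing upper bounds; the
supremum of that sequence is squeezed between those of the subfamily and of the whole family. -/

open Set

theorem exists_monotone_seq_isCofinalFor_of_directedOn {α : Type*} [Preorder α] {s t : Set α}
    (hs : DirectedOn (· ≤ ·) s) (hne : s.Nonempty) (hts : t ⊆ s) (ht : t.Countable) :
    ∃ u : ℕ → α, Monotone u ∧ (∀ n, u n ∈ s) ∧ IsCofinalFor t (range u) := by
  have : Nonempty s := hne.to_subtype
  obtain ⟨e, he⟩ := countable_iff_exists_subset_range.1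
    (ht.preimage (Subtype.val_injective (p := (· ∈ s))))
  have : IsDirectedOrder s := hs.isDirectedOrder
  choose ub le_ub_left le_ub_right using exists_ge_ge (α := s)
  let u : ℕ → s := Nat.rec (e 0) fun n a ↦ ub a (e (n + 1))
  have he_le : ∀ n, e n ≤ u n
    | 0 => le_rfl
    | n + 1 => le_ub_right (u n) (e (n + 1))
  have hu_mono : Monotone u :=
    monotone_nat_of_le_succ fun n ↦ le_ub_left (u n) (e (n + 1))
  refine ⟨Subtype.val ∘ u, hu_mono, fun n ↦ (u n).2, fun a ha ↦ ?_⟩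
  obtain ⟨n, hn⟩ := he (show ⟨a, hts ha⟩ ∈ ((↑) : s → α) ⁻¹' t from ha)
  exact ⟨(u n).1, mem_range_self n, Subtype.coe_le_coe.2 (hn.ge.trans (he_le n))⟩

theorem exists_monotone_seq_isLUB_of_directed {ι X E : Type*} [Nonempty ι] [TopologicalSpace X]
    [HereditarilyLindelofSpace X] [LinearOrder E] [TopologicalSpace E] [OrderClosedTopology E]
    [DenselyOrdered E] [TopologicalSpace.SeparableSpace E] {f : ι → X → E} {s : X → E}
    (hf : ∀ i, LowerSemicontinuous (f i)) (hdir : Directed (· ≤ ·) f) (hs : IsLUB (range f) s) :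
    ∃ k : ℕ → ι, Monotone (f ∘ k) ∧ IsLUB (range (f ∘ k)) s := by
  obtain ⟨t, htf, ht_countable, hts⟩ :=
    exists_countable_lowerSemicontinuous_isLUB (forall_mem_range.2 hf) hs
  obtain ⟨u, hu_mono, hu_mem, htu⟩ := exists_monotone_seq_isCofinalFor_of_directedOn
    hdir.directedOn_range (range_nonempty f) htf ht_countable
  choose k hk using hu_mem
  obtain rfl : f ∘ k = u := funext hk
  exact ⟨k, hu_mono, upperBounds_mono_set (range_comp_subset_range k f) hs.1,
    fun b hb ↦ hts.2 (upperBounds_mono_of_isCofinalFor htu hb)⟩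

theorem exists_monotone_seq_same_sup_general
    {X : Type*} [TopologicalSpace X] [HereditarilyLindelofSpace X]
    (F : Set (X → ℝ)) (hFne : F.Nonempty) (hF : ∀ f ∈ F, LowerSemicontinuous f)
    (hdir : DirectedOn (· ≤ ·) F) :
    ∃ f : ℕ → X → ℝ, (∀ n, f n ∈ F) ∧ (∀ n x, f n x ≤ f (n + 1) x) ∧
      ∀ x, (⨆ n, (f n x : EReal)) = ⨆ g : F, ((g : X → ℝ) x : EReal) := by
  have : Nonempty F := hFne.to_subtype
  let toEReal (g : F) (x : X) : EReal := (g : X → ℝ) x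
  have hlsc (g : F) : LowerSemicontinuous (toEReal g) :=
    continuous_coe_real_ereal.comp_lowerSemicontinuous (hF g g.2) EReal.coe_strictMono.monotone
  have htoEReal_dir : Directed (· ≤ ·) toEReal := fun g h ↦
    let ⟨b, hb, hgb, hhb⟩ := hdir g g.2 h h.2
    ⟨⟨b, hb⟩, fun x ↦ EReal.coe_le_coe_iff.2 (hgb x), fun x ↦ EReal.coe_le_coe_iff.2 (hhb x)⟩
  obtain ⟨k, hk_mono, hk_lub⟩ := exists_monotone_seq_isLUB_of_directed hlsc htoEReal_dir isLUB_iSup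
  refine ⟨fun n ↦ k n, fun n ↦ (k n).2,
    fun n x ↦ EReal.coe_le_coe_iff.1 (hk_mono n.le_succ x), fun x ↦ ?_⟩
  simpa only [iSup_apply, Function.comp_apply, toEReal] using congrFun hk_lub.iSup_eq x

/-- On a second-countable topological space `X`, any nonempty family `F` of
continuous real-valued functions that is closed under pointwise maximum admits a pointwise
nondecreasing sequence of its elements with the same pointwise supremum
(in the extended reals). -/
theorem exists_monotone_seq_same_sup
    {X : Type*} [TopologicalSpace X] [SecondCountableTopology X]
    (F : Set (X → ℝ)) (hFne : F.Nonempty) (hF : ∀ f ∈ F, Continuous f)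
    (hmax : ∀ f₁ ∈ F, ∀ f₂ ∈ F, (fun x => max (f₁ x) (f₂ x)) ∈ F) :
    ∃ f : ℕ → X → ℝ, (∀ n, f n ∈ F) ∧ (∀ n x, f n x ≤ f (n + 1) x) ∧
      ∀ x, (⨆ n, (f n x : EReal)) = ⨆ g : F, ((g : X → ℝ) x : EReal) :=
  exists_monotone_seq_same_sup_general F hFne (fun f hf ↦ (hF f hf).lowerSemicontinuous)
    (directedOn_of_sup_mem fun f₁ f₂ hf₁ hf₂ ↦ hmax f₁ hf₁ f₂ hf₂)
end

section
/- Fix 0 ≤ s ≤ T, d ∈ ℕ, and a compact metric space U. Let Ω := C([s,T], ℝ^d) be the space of continuous paths, endowed with the raw natural filtration 𝔅 = (𝔅_t)_{s ≤ t ≤ T}, where 𝔅_t is the σ-algebra generated by the coordinate evaluation maps y ↦ y(u) for s ≤ u ≤ t. Call τ : Ω → [s,T] a stopping rule if {τ ≤ t} ∈ 𝔅_t for every t ∈ [s,T], and for a stopping rule τ let 𝔅_τ := {A ⊆ Ω : A ∩ {τ ≤ t} ∈ 𝔅_t for all t ∈ [s,T]}. Given a stopping rule τ, call a function α : {(t,y)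 : t ∈ (τ(y), T], y ∈ Ω} → U an elementary strategy starting at τ if there exist n ∈ ℕ, stopping rules τ = τ₀ ≤ τ₁ ≤ … ≤ τ_n = T, and maps ξ_k : Ω → U (k = 1,…,n) with each ξ_k measurable from 𝔅_{τ_{k-1}} to the Borel σ-algebra of U, such that α(t,y) = ξ_k(y) whenever τ_{k-1}(y) < t ≤ τ_k(y). Then: for any stopping rule τ, any elementary strategy α starting at s (i.e. at the constant stopping rule s), and any elementary strategy α̃ starting at τ, the concatenation α ⊗_τ α̃ : (s,T] × Ω → U defined by (α ⊗_τ α̃)(t,y) := α(t,y) if s < t ≤ τ(y) and (α ⊗_τ α̃)(t,y) := α̃(t,y) if τ(y) < t ≤ T, is again an elementary strategy starting at s. -/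
open MeasureTheory

namespace ElementaryStrategies

/-- The path space `Ω = C([s,T], ℝ^d)` of continuous paths. -/
abbrev PathSpace (s T : ℝ) (d : ℕ) := C(Set.Icc s T, EuclideanSpace ℝ (Fin d))

/-- The raw natural filtration `𝔅_t` on the path space: the σ-algebra generated by the
coordinate evaluation maps `y ↦ y(u)` for `s ≤ u ≤ t`. -/
def rawFiltration (s T : ℝ) (d : ℕ) (t : ℝ) : MeasurableSpace (PathSpace s T d) :=
  ⨆ u : {u : Set.Icc s T // (u : ℝ) ≤ t},
    MeasurableSpace.comap (fun y : PathSpace s T d => y u.1) inferInstance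

/-- A stopping rule: a map `τ : Ω → [s,T]` with `{τ ≤ t} ∈ 𝔅_t` for every `t ∈ [s,T]`. -/
def IsStoppingRule (s T : ℝ) (d : ℕ) (τ : PathSpace s T d → ℝ) : Prop :=
  (∀ y, τ y ∈ Set.Icc s T) ∧
    ∀ t ∈ Set.Icc s T, MeasurableSet[rawFiltration s T d t] {y | τ y ≤ t}

/-- Measurability of `ξ : Ω → U` with respect to the stopped σ-algebra
`𝔅_τ = {A : A ∩ {τ ≤ t} ∈ 𝔅_t for all t ∈ [s,T]}` (with `U` Borel). -/
def MeasurableWrtStopped {U : Type*} [MeasurableSpace U]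
    (s T : ℝ) (d : ℕ) (τ : PathSpace s T d → ℝ) (ξ : PathSpace s T d → U) : Prop :=
  ∀ B : Set U, MeasurableSet B →
    ∀ t ∈ Set.Icc s T, MeasurableSet[rawFiltration s T d t] (ξ ⁻¹' B ∩ {y | τ y ≤ t})

/-- An elementary (feed-back) strategy `α` starting at the stopping rule `τ`:
there are finitely many nondecreasing stopping rules `τ = τ₀ ≤ τ₁ ≤ … ≤ τ_n = T` and
`𝔅_{τ_{k-1}}`-measurably chosen constant actions `ξ_k : Ω → U` such that
`α(t,y) = ξ_k(y)` whenever `τ_{k-1}(y) < t ≤ τ_k(y)`. (We represent `α`, which the paper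
defines only on `{(t,y) : τ(y) < t ≤ T}`, as a total function whose values matter only
on that region.) -/
def IsElementaryStrategy {U : Type*} [MeasurableSpace U]
    (s T : ℝ) (d : ℕ) (τ : PathSpace s T d → ℝ) (α : ℝ → PathSpace s T d → U) : Prop :=
  IsStoppingRule s T d τ ∧
    ∃ (n : ℕ) (τs : ℕ → PathSpace s T d → ℝ) (ξ : ℕ → PathSpace s T d → U),
      (∀ k ≤ n, IsStoppingRule s T d (τs k)) ∧
      τs 0 = τ ∧
      (∀ y, τs n y = T) ∧
      (∀ k < n, ∀ y, τs k y ≤ τs (k + 1) y) ∧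
      (∀ k, 1 ≤ k → k ≤ n → MeasurableWrtStopped s T d (τs (k - 1)) (ξ k)) ∧
      (∀ k, 1 ≤ k → k ≤ n → ∀ t y, τs (k - 1) y < t → t ≤ τs k y → α t y = ξ k y)

/-!
Truncating the grid of `α` at `τ` gives a grid ending at `τ`, to which the grid of `α̃` is appended.
If `α` equals a `𝔅_σ`-measurable `ξ` on the grid interval starting at `σ`, then `ξ` on `{σ ≤ τ}`,
extended by a constant, is `𝔅_{σ ∧ τ}`-measurable and serves on the truncated interval: on `{τ < σ}`
that interval is empty, so the value chosen there is irrelevant.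
-/

section

variable {U : Type*} [MeasurableSpace U] {s T : ℝ} {d : ℕ} {ρ σ τ : PathSpace s T d → ℝ}

lemma rawFiltration_mono (s T : ℝ) (d : ℕ) : Monotone (rawFiltration s T d) :=
  fun _ _ hab => iSup_mono' fun u => ⟨⟨u.1, u.2.trans hab⟩, le_rfl⟩

/-- The raw filtration as a Mathlib filtration, which gives access to the library's stopping-time
lemmas. It is indexed by all of `ℝ`, so that real-valued stopping rules need no coercion to
`[s,T]`. -/
def pathFiltration (s T : ℝ) (d : ℕ) : Filtration ℝ (⨆ t, rawFiltration s T d t) where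
  seq := rawFiltration s T d
  mono' := rawFiltration_mono s T d
  le' := le_iSup _

lemma measurableSet_inter_le_of_forall_mem_Icc (hτ : ∀ y, τ y ∈ Set.Icc s T)
    {A : Set (PathSpace s T d)}
    (hA : ∀ t ∈ Set.Icc s T, MeasurableSet[rawFiltration s T d t] (A ∩ {y | τ y ≤ t})) (t : ℝ) :
    MeasurableSet[rawFiltration s T d t] (A ∩ {y | τ y ≤ t}) := by
  rcases lt_or_ge t s with hts | hst
  · have hempty : {y | τ y ≤ t} = ∅ :=
      Set.eq_empty_of_forall_notMem fun y hy => (hts.trans_le (hτ y).1).not_ge hy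
    simp only [hempty, Set.inter_empty, MeasurableSet.empty]
  · have htruncate : {y | τ y ≤ t} = {y | τ y ≤ min t T} :=
      Set.ext fun y => ⟨fun hy => le_min hy (hτ y).2, fun hy => le_trans hy (min_le_left t T)⟩
    have hsT : s ≤ T := (hτ 0).1.trans (hτ 0).2
    rw [htruncate]
    exact rawFiltration_mono s T d (min_le_left t T) _
      (hA _ ⟨le_min hst hsT, min_le_right t T⟩)

lemma IsStoppingRule.isStoppingTime (hτ : IsStoppingRule s T d τ) :
    IsStoppingTime (pathFiltration s T d) fun y => (τ y : WithTop ℝ) := by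
  intro t
  have hle : MeasurableSet[rawFiltration s T d t] {y | τ y ≤ t} := by
    simpa only [Set.univ_inter] using
      measurableSet_inter_le_of_forall_mem_Icc (A := Set.univ) hτ.1
        (by simpa only [Set.univ_inter] using hτ.2) t
  simp only [WithTop.coe_le_coe]
  exact hle

lemma measurableWrtStopped_iff (hτ : IsStoppingRule s T d τ) {ξ : PathSpace s T d → U} :
    MeasurableWrtStopped s T d τ ξ ↔ Measurable[hτ.isStoppingTime.measurableSpace] ξ := by
  refine forall₂_congr fun B _ => ?_
  simp only [hτ.isStoppingTime.measurableSet, WithTop.coe_le_coe]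
  refine ⟨fun h => ?_, fun h t _ => h.2 t⟩
  have hstopped := measurableSet_inter_le_of_forall_mem_Icc hτ.1 h
  have hT : ξ ⁻¹' B ∩ {y | τ y ≤ T} = ξ ⁻¹' B := Set.inter_eq_left.2 fun y _ => (hτ.1 y).2
  exact ⟨le_iSup (rawFiltration s T d) T _ (hT ▸ hstopped T), hstopped⟩

protected lemma IsStoppingRule.min (hσ : IsStoppingRule s T d σ) (hτ : IsStoppingRule s T d τ) :
    IsStoppingRule s T d fun y => min (σ y) (τ y) := by
  refine ⟨fun y => ⟨le_min (hσ.1 y).1 (hτ.1 y).1, min_le_of_left_le (hσ.1 y).2⟩, fun t ht => ?_⟩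
  simp only [min_le_iff, Set.ofPred_or]
  exact (hσ.2 t ht).union (hτ.2 t ht)

lemma measurable_ite_le_of_isStoppingTime {Ω ι : Type*} [LinearOrder ι] [TopologicalSpace ι]
    [SecondCountableTopology ι] [OrderTopology ι] {m : MeasurableSpace Ω} {f : Filtration ι m}
    {σ τ : Ω → WithTop ι} (hσ : IsStoppingTime f σ) (hτ : IsStoppingTime f τ) {ξ η : Ω → U}
    (hξ : Measurable[hσ.measurableSpace] ξ) (hη : Measurable[hτ.measurableSpace] η) :
    Measurable[(hσ.min hτ).measurableSpace] fun ω => if σ ω ≤ τ ω then ξ ω else η ω := by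
  intro B hB
  have hle := hσ.measurableSet_stopping_time_le_min hτ
  have hξB := hσ.measurableSet_inter_le hτ _ (hξ hB)
  have hηB : MeasurableSet[(hσ.min hτ).measurableSpace] (η ⁻¹' B ∩ {ω | τ ω ≤ σ ω}) := by
    rw [hσ.measurableSet_min_iff hτ, and_comm, ← hτ.measurableSet_min_iff hσ]
    exact hτ.measurableSet_inter_le hσ _ (hη hB)
  convert hξB.union (hηB.diff hle) using 1
  ext ω
  by_cases h : σ ω ≤ τ ω
  · simp [h]
  · simp [h, (not_le.1 h).le]

lemma MeasurableWrtStopped.ite_le {ξ η : PathSpace s T d → U}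
    (hσ : IsStoppingRule s T d σ) (hτ : IsStoppingRule s T d τ)
    (hξ : MeasurableWrtStopped s T d σ ξ) (hη : MeasurableWrtStopped s T d τ η) :
    MeasurableWrtStopped s T d (fun y => min (σ y) (τ y))
      fun y => if σ y ≤ τ y then ξ y else η y := by
  rw [measurableWrtStopped_iff hσ] at hξ
  rw [measurableWrtStopped_iff hτ] at hη
  rw [measurableWrtStopped_iff (hσ.min hτ)]
  simpa only [WithTop.coe_le_coe] using
    measurable_ite_le_of_isStoppingTime hσ.isStoppingTime hτ.isStoppingTime hξ hη

lemma IsStoppingRule.measurableWrtStopped_const (hτ : IsStoppingRule s T d τ) (u : U) :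
    MeasurableWrtStopped s T d τ fun _ => u :=
  (measurableWrtStopped_iff hτ).2 measurable_const

/-- `α` is an elementary strategy on the stochastic interval `(ρ, σ]`: there are stopping rules
`ρ = τ₀ ≤ … ≤ τ_n = σ` such that `α` takes a `𝔅_{τ_{k-1}}`-measurably chosen constant value on
each `(τ_{k-1}, τ_k]`. The chain is built leftwards, `cons` prepending one interval, so that
operations on elementary strategies need no indices. -/
inductive IsElementaryBetween (α : ℝ → PathSpace s T d → U) :
    (PathSpace s T d → ℝ) → (PathSpace s T d → ℝ) → Prop
  | refl {ρ : PathSpace s T d → ℝ} (hρ : IsStoppingRule s T d ρ) : IsElementaryBetween α ρ ρ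
  | cons {ρ σ τ : PathSpace s T d → ℝ} {ξ : PathSpace s T d → U}
      (hρ : IsStoppingRule s T d ρ) (hρσ : ∀ y, ρ y ≤ σ y) (hξ : MeasurableWrtStopped s T d ρ ξ)
      (hαξ : ∀ t y, ρ y < t → t ≤ σ y → α t y = ξ y) (hα : IsElementaryBetween α σ τ) :
      IsElementaryBetween α ρ τ

namespace IsElementaryBetween

variable {α β : ℝ → PathSpace s T d → U}

lemma isStoppingRule_left (hα : IsElementaryBetween α ρ σ) : IsStoppingRule s T d ρ := by
  cases hα <;> assumption

protected lemma le (hα : IsElementaryBetween α ρ σ) (y : PathSpace s T d) : ρ y ≤ σ y := by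
  induction hα with
  | refl => exact le_rfl
  | cons _ hρσ _ _ _ ih => exact (hρσ y).trans ih

protected lemma trans (hρσ : IsElementaryBetween α ρ σ) (hστ : IsElementaryBetween α σ τ) :
    IsElementaryBetween α ρ τ := by
  induction hρσ with
  | refl => exact hστ
  | cons hρ hle hξ hαξ _ ih => exact .cons hρ hle hξ hαξ (ih hστ)

protected lemma congr (hα : IsElementaryBetween α ρ σ)
    (hβα : ∀ t y, ρ y < t → t ≤ σ y → β t y = α t y) : IsElementaryBetween β ρ σ := by
  induction hα with
  | refl hρ => exact .refl hρ
  | cons hρ hle hξ hαξ hα ih =>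
    refine .cons hρ hle hξ (fun t y hlt htle => ?_)
      (ih fun t y hlt htle => hβα t y ((hle y).trans_lt hlt) htle)
    rw [hβα t y hlt (htle.trans (hα.le y)), hαξ t y hlt htle]

protected lemma min (hα : IsElementaryBetween α ρ σ) (hτ : IsStoppingRule s T d τ) :
    IsElementaryBetween α (fun y => min (ρ y) (τ y)) fun y => min (σ y) (τ y) := by
  induction hα with
  | refl hρ => exact .refl (hρ.min hτ)
  | @cons ρ ρ' _ ξ hρ hle hξ hαξ _ ih =>
    refine .cons (hρ.min hτ) (fun y => min_le_min_right _ (hle y))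
      (hξ.ite_le hρ hτ (hτ.measurableWrtStopped_const (ξ 0))) (fun t y hlt htle => ?_) ih
    obtain ⟨htρ', htτ⟩ := le_min_iff.1 htle
    have hρt : ρ y < t := (min_lt_iff.1 hlt).resolve_right htτ.not_gt
    rw [if_pos (hρt.le.trans htτ), hαξ t y hρt htρ']

lemma isElementaryStrategy (hα : IsElementaryBetween α τ fun _ => T) :
    IsElementaryStrategy s T d τ α := by
  refine ⟨hα.isStoppingRule_left, ?_⟩
  generalize hυ : (fun _ => T) = υ at hα
  induction hα with
  | @refl ρ hρ =>
    exact ⟨0, fun _ => ρ, fun _ => α 0, fun _ _ => hρ, rfl, fun y => (congrFun hυ y).symm,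
      fun _ hk => by omega, fun _ _ _ => by omega, fun _ _ _ => by omega⟩
  | @cons ρ σ _ η hρ hle hη hαη _ ih =>
    obtain ⟨n, τs, ξ, hτs, rfl, hT, hmono, hξ, hαξ⟩ := ih hυ
    refine ⟨n + 1, fun | 0 => ρ | k + 1 => τs k, fun | 0 | 1 => η | k + 2 => ξ (k + 1),
      ?_, rfl, hT, ?_, ?_, ?_⟩
    · rintro (_ | k) hk
      exacts [hρ, hτs k (by omega)]
    · rintro (_ | k) hk
      exacts [hle, hmono k (by omega)]
    · rintro (_ | _ | k) hk hk'
      exacts [absurd hk (by omega), hη, hξ (k + 1) (by omega) (by omega)]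
    · rintro (_ | _ | k) hk hk'
      exacts [absurd hk (by omega), hαη, hαξ (k + 1) (by omega) (by omega)]

end IsElementaryBetween

lemma IsElementaryStrategy.isElementaryBetween {α : ℝ → PathSpace s T d → U}
    (hα : IsElementaryStrategy s T d τ α) : IsElementaryBetween α τ fun _ => T := by
  obtain ⟨-, n, τs, ξ, hτs, rfl, hT, hmono, hξ, hαξ⟩ := hα
  rw [← funext hT]
  refine Nat.decreasingInduction (motive := fun k _ => IsElementaryBetween α (τs k) (τs n))
    (fun k hk ih => ?_) (.refl (hτs n le_rfl)) (Nat.zero_le n)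
  exact .cons (hτs k hk.le) (hmono k hk) (hξ (k + 1) (by omega) hk) (hαξ (k + 1) (by omega) hk) ih

theorem concatenation_isElementaryStrategy_general {α αt : ℝ → PathSpace s T d → U}
    (hα : IsElementaryStrategy s T d ρ α) (hαt : IsElementaryStrategy s T d τ αt) :
    IsElementaryStrategy s T d (fun y => min (ρ y) (τ y))
      (fun t y => if t ≤ τ y then α t y else αt t y) := by
  have hτ : IsStoppingRule s T d τ := hαt.1
  have hα_upto : IsElementaryBetween α (fun y => min (ρ y) (τ y)) τ := by
    simpa only [min_eq_right (hτ.1 _).2] using hα.isElementaryBetween.min hτ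
  exact ((hα_upto.congr fun _ _ _ htτ => if_pos htτ).trans
    (hαt.isElementaryBetween.congr fun _ _ hτt _ => if_neg hτt.not_ge)).isElementaryStrategy

end

/-- Concatenation of elementary feed-back strategies: for a stopping rule
`τ`, an elementary strategy `α` starting at `s` (the constant stopping rule `s`), and an
elementary strategy `α̃` starting at `τ`, the concatenation `α ⊗_τ α̃`, equal to `α(t,y)`
for `s < t ≤ τ(y)` and to `α̃(t,y)` for `τ(y) < t ≤ T`, is an elementary strategy
starting at `s`. -/
theorem concatenation_isElementaryStrategy
    {U : Type*} [MetricSpace U] [CompactSpace U] [MeasurableSpace U] [BorelSpace U]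
    (s T : ℝ) (hsT : s ≤ T) (d : ℕ)
    (τ : PathSpace s T d → ℝ) (hτ : IsStoppingRule s T d τ)
    (α : ℝ → PathSpace s T d → U)
    (hα : IsElementaryStrategy s T d (fun _ => s) α)
    (αt : ℝ → PathSpace s T d → U)
    (hαt : IsElementaryStrategy s T d τ αt) :
    IsElementaryStrategy s T d (fun _ => s)
      (fun t y => if t ≤ τ y then α t y else αt t y) := by
  simpa only [min_eq_left (hτ.1 _).1] using concatenation_isElementaryStrategy_general hα hαt

end ElementaryStrategies
end
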